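/- Let K = ⋃_{ℓ=1}^L [a_ℓ, b_ℓ] ⊆ [−1,1] with −1 = a_1 < b_1 < a_2 < ⋯ < a_L < b_L = 1, let w be continuous and strictly positive on K, and let P = Σ_{n=0}^N p_n T_n be a real polynomial of degree at most N. Then ‖P/w‖_{L1(K)} equals the infimum, over all real sequences y^{1,±},…,y^{L,±} ∈ ℝ^ℕ such that for each ℓ one has y^{ℓ,+}_k − y^{ℓ,−}_k = (J^ℓ W^ℓ p)_k for all k ≥ 0 and Toep_d(y^{ℓ,±}) is positive semidefinite for all d ≥ 0, of the quantity Σ_{ℓ=1}^L ((b_ℓ−a_ℓ)/2)(y^{ℓ,+}_0 + y^{ℓ,−}_0); moreover this infimum is attained. -/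

import Mathlib

open MeasureTheory Filter Polynomial

/-- The `(d+1) × (d+1)` symmetric Toeplitz matrix built from a vector `y ∈ ℝ^{d+1}`,
with entries `y_{|i−j|}`. -/
noncomputable def toepFin (d : ℕ) (y : Fin (d + 1) → ℝ) :
    Matrix (Fin (d + 1)) (Fin (d + 1)) ℝ :=
  fun i j => y ⟨(((i : ℕ) : ℤ) - ((j : ℕ) : ℤ)).natAbs, by omega⟩

/-- The transplantation `P_ℓ(x) = P(((bℓ−aℓ)x + aℓ + bℓ)/2)` of a polynomial
from `[aℓ, bℓ]` to `[-1, 1]`. -/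
noncomputable def transplant (aℓ bℓ : ℝ) (P : Polynomial ℝ) : Polynomial ℝ :=
  P.comp (Polynomial.C ((bℓ - aℓ) / 2) * Polynomial.X + Polynomial.C ((aℓ + bℓ) / 2))

/-- The entries `J^ℓ_{k,n} = ∫_0^π cos(kθ) sin((n+1)θ) / w_ℓ(cos θ) dθ`, where
`w_ℓ(x) = w(((bℓ−aℓ)x + aℓ + bℓ)/2)` is the transplantation of the weight `w`. -/
noncomputable def Jent (aℓ bℓ : ℝ) (w : ℝ → ℝ) (k n : ℕ) : ℝ :=
  ∫ θ in (0:ℝ)..Real.pi,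
    Real.cos (k * θ) * Real.sin ((n + 1) * θ) /
      w (((bℓ - aℓ) * Real.cos θ + aℓ + bℓ) / 2)

/-- The weighted `L1` norm `‖P/w‖_{L1(K)} = ∑_ℓ ∫_{a_ℓ}^{b_ℓ} |P(t)|/w(t) dt`
on `K = ⋃_{ℓ<L} [a ℓ, b ℓ]`. -/
noncomputable def L1K (L : ℕ) (a b : ℕ → ℝ) (w : ℝ → ℝ) (P : Polynomial ℝ) : ℝ :=
  ∑ ℓ ∈ Finset.range L, ∫ t in (a ℓ)..(b ℓ), |P.eval t| / w t

/-- The ersatz norm `⫽P⫽_d`: the infimum of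
`∑_ℓ ((b_ℓ−a_ℓ)/2)(y^{ℓ,+}_0 + y^{ℓ,−}_0)` over vectors `y^{ℓ,±} ∈ ℝ^{d+1}` with
`y^{ℓ,+} − y^{ℓ,−} = J^{ℓ,d} W^ℓ p` and `Toep_d(y^{ℓ,±}) ⪰ 0`, where `q ℓ = W^ℓ p` is
the vector of second-kind Chebyshev coefficients of the transplantation `P_ℓ`. -/
noncomputable def ersatz (L N d : ℕ) (a b : ℕ → ℝ) (w : ℝ → ℝ) (P : Polynomial ℝ) : ℝ :=
  sInf { s : ℝ |
    ∃ q : ℕ → Fin (N + 1) → ℝ,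
      (∀ ℓ < L, transplant (a ℓ) (b ℓ) P
          = ∑ n : Fin (N + 1), Polynomial.C (q ℓ n) * Polynomial.Chebyshev.U ℝ ((n : ℕ) : ℤ)) ∧
      ∃ yp ym : ℕ → Fin (d + 1) → ℝ,
        (∀ ℓ < L, ∀ k : Fin (d + 1),
            yp ℓ k - ym ℓ k
              = ∑ n : Fin (N + 1), Jent (a ℓ) (b ℓ) w (k : ℕ) (n : ℕ) * q ℓ n) ∧
        (∀ ℓ < L, (toepFin d (yp ℓ)).PosSemidef ∧ (toepFin d (ym ℓ)).PosSemidef) ∧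
        s = ∑ ℓ ∈ Finset.range L, ((b ℓ - a ℓ) / 2) * (yp ℓ 0 + ym ℓ 0) }

/-- The `(d+1) × (d+1)` symmetric Toeplitz section of an infinite sequence `y`. -/
noncomputable def toepN (d : ℕ) (y : ℕ → ℝ) : Matrix (Fin (d + 1)) (Fin (d + 1)) ℝ :=
  fun i j => y ((((i : ℕ) : ℤ)) - ((j : ℕ) : ℤ)).natAbs

/-!
Substituting `t = ((b - a) cos θ + a + b) / 2` turns `∫_a^b |P| / w` into `(b - a) / 2` times the
`L¹` norm on `[0, π]` of `g(θ) = (P / w)(t) sin θ`, and since `U_n(cos θ) sin θ = sin ((n + 1) θ)`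
the sequence `J W p` consists of the cosine moments of `g`. The moments of `g⁺` and `g⁻` are
feasible and have total mass `‖g‖₁`, so the bound is attained.

Conversely, let `y` have positive semidefinite Toeplitz sections. The functional `Λ_y : T_k ↦ y_k`
is nonnegative on polynomials `p ≥ 0` on `[-1, 1]`: the cosine moments of `p ∘ cos` also have
positive semidefinite Toeplitz sections, and the Schur product theorem applies. If `u - v` are the
moments of `g` and `|p| ≤ 1` on `[-1, 1]`, then
`∫ p(cos θ) g = Λ_u p - Λ_v p ≤ Λ_u 1 + Λ_v 1 = u_0 + v_0`, and by Weierstrass approximation and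
`L¹` duality these integrals come arbitrarily close to `‖g‖₁`.
-/

open scoped Interval Matrix Real Topology
open Real (arccos cos sin)
open Polynomial.Chebyshev (T U)

theorem sum_range_sum_range_natAbs_sub {M : Type*} [AddCommMonoid M] (f : ℕ → M) (n : ℕ) :
    ∑ i ∈ Finset.range n, ∑ j ∈ Finset.range n, f ((i : ℤ) - (j : ℤ)).natAbs
      = ∑ d ∈ Finset.range n, ∑ k ∈ Finset.range (d + 1), (if k = 0 then 1 else 2) • f k := by
  have column (n : ℕ) : ∑ i ∈ Finset.range n, f ((i : ℤ) - (n : ℤ)).natAbs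
      = ∑ k ∈ Finset.range n, f (k + 1) := by
    rw [← Finset.sum_range_reflect]
    refine Finset.sum_congr rfl fun k hk => congrArg f ?_
    have := Finset.mem_range.1 hk
    omega
  have row (n : ℕ) : ∑ j ∈ Finset.range n, f ((n : ℤ) - (j : ℤ)).natAbs
      = ∑ k ∈ Finset.range n, f (k + 1) := by
    rw [← column]
    exact Finset.sum_congr rfl fun j _ => congrArg f (by omega)
  induction n with
  | zero => simp
  | succ n ih =>
    simp only [Finset.sum_range_succ _ n, Finset.sum_add_distrib, ih, column, row,
      Finset.sum_range_succ' (fun k => (if k = 0 then 1 else 2) • f k)]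
    simp [two_nsmul, Finset.sum_add_distrib, add_assoc]

theorem nonneg_of_hasSum_mul_of_posSemidef_toepN {y z : ℕ → ℝ}
    (hy : ∀ d, (toepN d y).PosSemidef) (hz : ∀ d, (toepN d z).PosSemidef) {S : ℝ}
    (hS : HasSum (fun k => (if k = 0 then 1 else 2) • (y k * z k)) S) : 0 ≤ S := by
  -- The Cesàro means of the partial sums are, up to a factor, the sums of all entries of
  -- `Toep_d(y) ⊙ Toep_d(z)`, which is positive semidefinite by the Schur product theorem.
  refine ge_of_tendsto'
    ((hS.tendsto_sum_nat.comp (tendsto_add_atTop_nat 1)).cesaro) fun n => ?_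
  refine mul_nonneg (by positivity) ?_
  simp only [Function.comp_apply, ← sum_range_sum_range_natAbs_sub (fun k => y k * z k)]
  cases n with
  | zero => simp
  | succ d =>
    simpa [toepN, Finset.sum_range, dotProduct, Matrix.mulVec] using
      ((hy d).hadamard (hz d)).dotProduct_mulVec_nonneg 1

/-- The cosine moments `∫_0^π cos(kθ) f(θ) dθ` of a function on `[0, π]`. -/
noncomputable def cosMoment (f : ℝ → ℝ) (k : ℕ) : ℝ :=
  ∫ θ in 0..π, cos (k * θ) * f θ

theorem cosMoment_zero (f : ℝ → ℝ) : cosMoment f 0 = ∫ θ in 0..π, f θ := by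
  simp [cosMoment]

theorem cosMoment_add {f g : ℝ → ℝ} (hf : IntervalIntegrable f volume 0 π)
    (hg : IntervalIntegrable g volume 0 π) (k : ℕ) :
    cosMoment (f + g) k = cosMoment f k + cosMoment g k := by
  simp only [cosMoment, Pi.add_apply, mul_add]
  exact intervalIntegral.integral_add (hf.continuousOn_mul (by fun_prop))
    (hg.continuousOn_mul (by fun_prop))

theorem cosMoment_sub {f g : ℝ → ℝ} (hf : IntervalIntegrable f volume 0 π)
    (hg : IntervalIntegrable g volume 0 π) (k : ℕ) :
    cosMoment (f - g) k = cosMoment f k - cosMoment g k := by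
  simp only [cosMoment, Pi.sub_apply, mul_sub]
  exact intervalIntegral.integral_sub (hf.continuousOn_mul (by fun_prop))
    (hg.continuousOn_mul (by fun_prop))

theorem sum_sum_mul_cos_natAbs_sub {n : ℕ} (x : Fin n → ℝ) (θ : ℝ) :
    ∑ i, ∑ j, x i * x j * cos (((i : ℤ) - (j : ℤ)).natAbs * θ)
      = (∑ i, x i * cos (i * θ)) ^ 2 + (∑ i, x i * sin (i * θ)) ^ 2 := by
  have cos_natAbs_sub (i j : ℕ) : cos (((i : ℤ) - (j : ℤ)).natAbs * θ)
      = cos (i * θ) * cos (j * θ) + sin (i * θ) * sin (j * θ) := by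
    rw [← Real.cos_sub, ← sub_mul, Nat.cast_natAbs, Int.cast_abs]
    push_cast
    rw [← Real.cos_abs, abs_mul, abs_abs, ← abs_mul, Real.cos_abs]
  simp only [cos_natAbs_sub, sq, Finset.sum_mul_sum, ← Finset.sum_add_distrib]
  exact Finset.sum_congr rfl fun i _ => Finset.sum_congr rfl fun j _ => by ring

theorem posSemidef_toepN_cosMoment {f : ℝ → ℝ} (hf : IntervalIntegrable f volume 0 π)
    (hf0 : ∀ θ ∈ Set.Icc 0 π, 0 ≤ f θ) (d : ℕ) : (toepN d (cosMoment f)).PosSemidef := by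
  refine .of_dotProduct_mulVec_nonneg (Matrix.IsHermitian.ext fun i j => ?_) fun x => ?_
  · simp [toepN, ← Int.natAbs_neg ((i : ℤ) - (j : ℤ))]
  have integrable (k : ℕ) (c : ℝ) :
      IntervalIntegrable (fun θ => c * (cos (k * θ) * f θ)) volume 0 π :=
    (hf.continuousOn_mul (by fun_prop)).const_mul c
  calc (0 : ℝ)
      ≤ ∫ θ in 0..π,
          ((∑ i, x i * cos ((i : ℕ) * θ)) ^ 2 + (∑ i, x i * sin ((i : ℕ) * θ)) ^ 2) * f θ :=
        intervalIntegral.integral_nonneg Real.pi_nonneg fun θ hθ =>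
          mul_nonneg (by positivity) (hf0 θ hθ)
    _ = ∫ θ in 0..π,
          ∑ i, ∑ j, x i * x j * (cos ((((i : ℕ) : ℤ) - (j : ℕ)).natAbs * θ) * f θ) := by
        simp only [← sum_sum_mul_cos_natAbs_sub, Finset.sum_mul, mul_assoc]
    _ = ∑ i, ∑ j, x i * x j * toepN d (cosMoment f) i j := by
        simp only [← Finset.sum_product', toepN, cosMoment]
        rw [intervalIntegral.integral_finsetSum fun _ _ => integrable _ _]
        simp only [intervalIntegral.integral_const_mul]
    _ = star x ⬝ᵥ toepN d (cosMoment f) *ᵥ x := by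
        simp only [dotProduct, Matrix.mulVec, Pi.star_apply, star_trivial, Finset.mul_sum]
        exact Finset.sum_congr rfl fun i _ => Finset.sum_congr rfl fun j _ => by ring

/-- The Chebyshev polynomials of the first kind as a basis of `ℝ[X]`, on which linear functionals
with prescribed Chebyshev moments are defined. -/
noncomputable def chebyshevTBasis : Module.Basis ℕ ℝ ℝ[X] :=
  Sequence.basis ⟨fun n => T ℝ n, by simp⟩ (by simp)

theorem chebyshevTBasis_apply (n : ℕ) : chebyshevTBasis n = T ℝ n :=
  Sequence.basis_eq_self _ _ _

/-- The linear functional on `ℝ[X]` whose moments against the Chebyshev polynomials are `y`,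
that is, `T_k ↦ y_k`. -/
noncomputable def chebyshevFunctional (y : ℕ → ℝ) : ℝ[X] →ₗ[ℝ] ℝ :=
  chebyshevTBasis.constr ℝ y

theorem chebyshevFunctional_apply (y : ℕ → ℝ) (p : ℝ[X]) : chebyshevFunctional y p
    = ∑ k ∈ (chebyshevTBasis.repr p).support, chebyshevTBasis.repr p k * y k :=
  chebyshevTBasis.constr_apply ℝ y p

theorem chebyshevFunctional_T (y : ℕ → ℝ) (n : ℕ) : chebyshevFunctional y (T ℝ n) = y n := by
  rw [chebyshevFunctional, ← chebyshevTBasis_apply, Module.Basis.constr_basis]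

theorem chebyshevFunctional_C (y : ℕ → ℝ) (c : ℝ) : chebyshevFunctional y (C c) = c * y 0 := by
  rw [← mul_one (C c), ← smul_eq_C_mul, map_smul, smul_eq_mul]
  simpa using congrArg (c * ·) (chebyshevFunctional_T y 0)

theorem chebyshevFunctional_sub (y z : ℕ → ℝ) :
    chebyshevFunctional (y - z) = chebyshevFunctional y - chebyshevFunctional z :=
  map_sub (chebyshevTBasis.constr ℝ) y z

theorem chebyshevFunctional_cosMoment {f : ℝ → ℝ} (hf : IntervalIntegrable f volume 0 π)
    (p : ℝ[X]) : chebyshevFunctional (cosMoment f) p = ∫ θ in 0..π, p.eval (cos θ) * f θ := by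
  have eval_cos (θ : ℝ) : p.eval (cos θ) * f θ
      = ∑ k ∈ (chebyshevTBasis.repr p).support,
        chebyshevTBasis.repr p k * (cos (k * θ) * f θ) := by
    conv_lhs => rw [← chebyshevTBasis.linearCombination_repr p, Finsupp.linearCombination_apply]
    simp [Finsupp.sum, eval_finsetSum, chebyshevTBasis_apply, Finset.sum_mul, mul_assoc]
  simp only [eval_cos]
  rw [intervalIntegral.integral_finsetSum fun k _ =>
    (hf.continuousOn_mul (by fun_prop)).const_mul _]
  simp only [chebyshevFunctional_apply, cosMoment, intervalIntegral.integral_const_mul]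

theorem cosMoment_cos (j k : ℕ) :
    cosMoment (fun θ => cos (j * θ)) k = if j = k then if k = 0 then π else π / 2 else 0 := by
  have orthogonality := Chebyshev.integral_measureT_eq_integral_cos
    (f := fun x => (T ℝ k).eval x * (T ℝ j).eval x)
  simp only [Chebyshev.T_real_cos, Int.cast_natCast] at orthogonality
  rw [cosMoment, ← orthogonality]
  split_ifs with hjk hk
  · subst hjk hk
    exact Chebyshev.integral_eval_T_real_mul_self_measureT_zero
  · subst hjk
    exact Chebyshev.integral_T_real_mul_self_measureT_of_ne_zero hk
  · exact Chebyshev.integral_eval_T_real_mul_eval_T_real_measureT_of_ne (Ne.symm hjk)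

theorem cosMoment_eval_cos (p : ℝ[X]) (k : ℕ) :
    cosMoment (fun θ => p.eval (cos θ)) k
      = (if k = 0 then π else π / 2) * chebyshevTBasis.repr p k := by
  have hcos : IntervalIntegrable (fun θ => cos (k * θ)) volume 0 π :=
    Continuous.intervalIntegrable (by fun_prop) _ _
  calc cosMoment (fun θ => p.eval (cos θ)) k
      = chebyshevFunctional (cosMoment fun θ => cos (k * θ)) p := by
        rw [chebyshevFunctional_cosMoment hcos]
        simp only [cosMoment, mul_comm]
    _ = (if k = 0 then π else π / 2) * chebyshevTBasis.repr p k := by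
        simp only [chebyshevFunctional_apply, cosMoment_cos, eq_comm (a := k), mul_ite, mul_zero,
          Finset.sum_ite_eq', Finsupp.mem_support_iff]
        grind

theorem chebyshevFunctional_nonneg {y : ℕ → ℝ} (hy : ∀ d, (toepN d y).PosSemidef) {p : ℝ[X]}
    (hp : ∀ x ∈ Set.Icc (-1) 1, 0 ≤ p.eval x) : 0 ≤ chebyshevFunctional y p := by
  have hpsd (d : ℕ) : (toepN d (cosMoment fun θ => p.eval (cos θ))).PosSemidef :=
    posSemidef_toepN_cosMoment (Continuous.intervalIntegrable (by fun_prop) _ _)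
      (fun θ _ => hp _ (Real.cos_mem_Icc θ)) d
  suffices HasSum (fun k => (if k = 0 then 1 else 2) •
      (y k * cosMoment (fun θ => p.eval (cos θ)) k)) (π * chebyshevFunctional y p) from
    nonneg_of_mul_nonneg_right (nonneg_of_hasSum_mul_of_posSemidef_toepN hy hpsd this) Real.pi_pos
  have parseval (k : ℕ) : (if k = 0 then 1 else 2) •
      (y k * cosMoment (fun θ => p.eval (cos θ)) k) = π * (chebyshevTBasis.repr p k * y k) := by
    rw [cosMoment_eval_cos]
    split_ifs <;> simp only [one_smul, two_smul] <;> ring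
  simp only [parseval, chebyshevFunctional_apply]
  refine (hasSum_sum_of_ne_finset_zero fun k hk => ?_).mul_left π
  simp [Finsupp.notMem_support_iff.1 hk]

theorem le_of_forall_pos_le_add_mul {𝕜 : Type*} [Field 𝕜] [LinearOrder 𝕜]
    [IsStrictOrderedRing 𝕜] {x y c : 𝕜} (h : ∀ ε > 0, x ≤ y + ε * c) : x ≤ y := by
  refine le_of_forall_pos_le_add fun δ hδ => (h (δ / (|c| + 1)) (by positivity)).trans ?_
  gcongr
  rw [div_mul_eq_mul_div, div_le_iff₀ (by positivity)]
  gcongr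
  linarith [le_abs_self c]

theorem integral_abs_le_of_forall_integral_mul_le {X : Type*} [TopologicalSpace X]
    [NormalSpace X] [MeasurableSpace X] [BorelSpace X] {μ : Measure X} [IsFiniteMeasure μ]
    [μ.WeaklyRegular] {f : X → ℝ} {C : ℝ} (hf : Integrable f μ)
    (hC : ∀ φ : X → ℝ, Continuous φ → (∀ x, |φ x| ≤ 1) → ∫ x, φ x * f x ∂μ ≤ C) :
    ∫ x, |f x| ∂μ ≤ C := by
  refine le_of_forall_pos_le_add_mul (c := 2 + μ.real Set.univ) fun ε hε => ?_
  -- `φ = h / (|h| + ε)` is a continuous substitute for the sign of `f`.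
  obtain ⟨h, hfh, hh⟩ := hf.exists_boundedContinuous_integral_sub_le hε
  set φ : X → ℝ := fun x => h x / (|h x| + ε)
  have hφ : Continuous φ := h.continuous.div (by fun_prop) fun x => by positivity
  have abs_φ_le (x : X) : |φ x| ≤ 1 := by
    rw [abs_div, abs_of_pos (by positivity : 0 < |h x| + ε)]
    exact div_le_one_of_le₀ (by linarith) (by positivity)
  have abs_h_le (x : X) : |h x| ≤ φ x * h x + ε := by
    rw [← sub_le_iff_le_add, div_mul_eq_mul_div, le_div_iff₀ (by positivity)]
    nlinarith [sq_abs (h x)]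
  have abs_f_le (x : X) : |f x| ≤ φ x * f x + (2 * ‖f x - h x‖ + ε) := by
    have := (abs_le.1 ((abs_mul (φ x) (f x - h x)).trans_le
      (mul_le_of_le_one_left (abs_nonneg _) (abs_φ_le x)))).1
    rw [Real.norm_eq_abs]
    linarith [abs_h_le x, abs_sub_abs_le_abs_sub (f x) (h x)]
  have integrable_φf : Integrable (fun x => φ x * f x) μ :=
    hf.bdd_mul hφ.aestronglyMeasurable (ae_of_all _ abs_φ_le)
  have integrable_sub : Integrable (fun x => ‖f x - h x‖) μ := (hf.sub hh).norm
  have integrable_error : Integrable (fun x => 2 * ‖f x - h x‖ + ε) μ :=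
    (integrable_sub.const_mul 2).add (integrable_const ε)
  calc ∫ x, |f x| ∂μ
      ≤ ∫ x, φ x * f x + (2 * ‖f x - h x‖ + ε) ∂μ :=
        integral_mono hf.abs (integrable_φf.add integrable_error) abs_f_le
    _ = ∫ x, φ x * f x ∂μ + (2 * ∫ x, ‖f x - h x‖ ∂μ + ε * μ.real Set.univ) := by
        rw [integral_add integrable_φf integrable_error,
          integral_add (integrable_sub.const_mul 2) (integrable_const ε), integral_const_mul,
          integral_const, smul_eq_mul, mul_comm ε]
    _ ≤ C + (2 * ε + ε * μ.real Set.univ) := by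
        gcongr
        exact hC φ hφ abs_φ_le
    _ = C + ε * (2 + μ.real Set.univ) := by ring

theorem integral_eval_cos_mul_le_of_sub_eq_cosMoment {u v : ℕ → ℝ} {g : ℝ → ℝ}
    (hu : ∀ d, (toepN d u).PosSemidef) (hv : ∀ d, (toepN d v).PosSemidef)
    (hg : IntervalIntegrable g volume 0 π) (huv : u - v = cosMoment g) {p : ℝ[X]} {c : ℝ}
    (hp : ∀ x ∈ Set.Icc (-1) 1, |p.eval x| ≤ c) :
    ∫ θ in 0..π, p.eval (cos θ) * g θ ≤ c * (u 0 + v 0) := by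
  have hsub : 0 ≤ chebyshevFunctional u (C c - p) :=
    chebyshevFunctional_nonneg hu fun x hx => by simpa using (abs_le.1 (hp x hx)).2
  have hadd : 0 ≤ chebyshevFunctional v (C c + p) :=
    chebyshevFunctional_nonneg hv fun x hx => by
      simpa [neg_le_iff_add_nonneg'] using (abs_le.1 (hp x hx)).1
  rw [← chebyshevFunctional_cosMoment hg, ← huv, chebyshevFunctional_sub, LinearMap.sub_apply]
  rw [map_sub, chebyshevFunctional_C] at hsub
  rw [map_add, chebyshevFunctional_C] at hadd
  linarith

theorem integral_continuous_mul_le_of_sub_eq_cosMoment {u v : ℕ → ℝ} {g : ℝ → ℝ}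
    (hu : ∀ d, (toepN d u).PosSemidef) (hv : ∀ d, (toepN d v).PosSemidef)
    (hg : IntervalIntegrable g volume 0 π) (huv : u - v = cosMoment g) {φ : ℝ → ℝ}
    (hφ : Continuous φ) (hφ1 : ∀ θ, |φ θ| ≤ 1) : ∫ θ in 0..π, φ θ * g θ ≤ u 0 + v 0 := by
  refine le_of_forall_pos_le_add_mul (c := u 0 + v 0 + ∫ θ in 0..π, |g θ|) fun ε hε => ?_
  obtain ⟨p, hp⟩ := exists_polynomial_near_of_continuousOn (-1) 1 (fun x => φ (arccos x))
    (hφ.comp Real.continuous_arccos).continuousOn ε hε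
  have abs_p_le (x : ℝ) (hx : x ∈ Set.Icc (-1) 1) : |p.eval x| ≤ 1 + ε := by
    linarith [hp x hx, hφ1 (arccos x), abs_sub_abs_le_abs_sub (p.eval x) (φ (arccos x))]
  have φ_mul_le (θ : ℝ) (hθ : θ ∈ Set.Icc 0 π) :
      φ θ * g θ ≤ p.eval (cos θ) * g θ + ε * |g θ| := by
    have near := (hp (cos θ) (Real.cos_mem_Icc θ)).le
    rw [Real.arccos_cos hθ.1 hθ.2] at near
    have := (abs_mul (p.eval (cos θ) - φ θ) (g θ)).trans_le
      (mul_le_mul_of_nonneg_right near (abs_nonneg _))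
    linarith [(abs_le.1 this).1]
  have integrable_p : IntervalIntegrable (fun θ => p.eval (cos θ) * g θ) volume 0 π :=
    hg.continuousOn_mul (by fun_prop)
  calc ∫ θ in 0..π, φ θ * g θ
      ≤ ∫ θ in 0..π, (p.eval (cos θ) * g θ + ε * |g θ|) :=
        intervalIntegral.integral_mono_on Real.pi_nonneg (hg.continuousOn_mul hφ.continuousOn)
          (integrable_p.add (hg.abs.const_mul ε)) φ_mul_le
    _ = (∫ θ in 0..π, p.eval (cos θ) * g θ) + ε * ∫ θ in 0..π, |g θ| := by
        rw [intervalIntegral.integral_add integrable_p (hg.abs.const_mul ε),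
          intervalIntegral.integral_const_mul]
    _ ≤ (1 + ε) * (u 0 + v 0) + ε * ∫ θ in 0..π, |g θ| := by
        gcongr
        exact integral_eval_cos_mul_le_of_sub_eq_cosMoment hu hv hg huv abs_p_le
    _ = u 0 + v 0 + ε * (u 0 + v 0 + ∫ θ in 0..π, |g θ|) := by ring

theorem integral_abs_le_of_sub_eq_cosMoment {u v : ℕ → ℝ} {g : ℝ → ℝ}
    (hu : ∀ d, (toepN d u).PosSemidef) (hv : ∀ d, (toepN d v).PosSemidef)
    (hg : IntervalIntegrable g volume 0 π) (huv : u - v = cosMoment g) :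
    ∫ θ in 0..π, |g θ| ≤ u 0 + v 0 := by
  rw [intervalIntegral.integral_of_le Real.pi_nonneg]
  refine integral_abs_le_of_forall_integral_mul_le hg.1 fun φ hφ hφ1 => ?_
  rw [← intervalIntegral.integral_of_le Real.pi_nonneg]
  exact integral_continuous_mul_le_of_sub_eq_cosMoment hu hv hg huv hφ hφ1

/-- The masses `u_0 + v_0` of the splittings `m = u - v` of a moment sequence into two sequences
whose Toeplitz sections are positive semidefinite: the values over which a single interval is
minimized, without the factor `(b - a) / 2`. -/
def splittingMass (m : ℕ → ℝ) : Set ℝ :=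
  {r | ∃ u v : ℕ → ℝ, u - v = m ∧ (∀ d, (toepN d u).PosSemidef ∧ (toepN d v).PosSemidef) ∧
    r = u 0 + v 0}

theorem isLeast_splittingMass_cosMoment {g : ℝ → ℝ} (hg : IntervalIntegrable g volume 0 π) :
    IsLeast (splittingMass (cosMoment g)) (∫ θ in 0..π, |g θ|) := by
  have hpos : IntervalIntegrable g⁺ volume 0 π := ⟨hg.1.pos_part, hg.2.pos_part⟩
  have hneg : IntervalIntegrable g⁻ volume 0 π := ⟨hg.1.neg_part, hg.2.neg_part⟩
  refine ⟨⟨cosMoment g⁺, cosMoment g⁻, ?_, fun d => ⟨?_, ?_⟩, ?_⟩, ?_⟩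
  · ext k
    rw [Pi.sub_apply, ← cosMoment_sub hpos hneg, posPart_sub_negPart]
  · exact posSemidef_toepN_cosMoment hpos (fun θ _ => posPart_nonneg g θ) d
  · exact posSemidef_toepN_cosMoment hneg (fun θ _ => negPart_nonneg g θ) d
  · rw [← cosMoment_add hpos hneg, posPart_add_negPart, cosMoment_zero]
    rfl
  · rintro _ ⟨u, v, huv, hpsd, rfl⟩
    exact integral_abs_le_of_sub_eq_cosMoment (fun d => (hpsd d).1) (fun d => (hpsd d).2) hg huv

/-- The cosine parametrization `θ ↦ ((b - a) cos θ + a + b) / 2` of `[a, b]` by `[0, π]`; it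
reverses the orientation. -/
noncomputable def cosParam (a b θ : ℝ) : ℝ :=
  ((b - a) * cos θ + a + b) / 2

/-- The pullback `f(t(θ)) sin θ` of the density `f(t) dt` under `t = cosParam a b`, without the
constant factor `(b - a) / 2`. -/
noncomputable def angularDensity (a b : ℝ) (f : ℝ → ℝ) (θ : ℝ) : ℝ :=
  f (cosParam a b θ) * sin θ

section CosParam

variable {a b : ℝ}

theorem differentiable_cosParam (a b : ℝ) : Differentiable ℝ (cosParam a b) := by
  unfold cosParam
  fun_prop

theorem deriv_cosParam (a b θ : ℝ) : deriv (cosParam a b) θ = -((b - a) / 2 * sin θ) := by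
  have := ((Real.hasDerivAt_cos θ).const_mul (b - a) |>.add_const a |>.add_const b).div_const 2
  exact this.deriv.trans (by ring)

theorem deriv_cosParam_nonpos (hab : a ≤ b) {θ : ℝ}
    (hθ : θ ∈ Set.Ioo (min 0 π) (max 0 π)) : deriv (cosParam a b) θ ≤ 0 := by
  rw [min_eq_left Real.pi_nonneg, max_eq_right Real.pi_nonneg] at hθ
  rw [deriv_cosParam, neg_nonpos]
  exact mul_nonneg (by linarith) (Real.sin_pos_of_mem_Ioo hθ).le

theorem cosParam_zero (a b : ℝ) : cosParam a b 0 = b := by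
  simp [cosParam]

theorem cosParam_pi (a b : ℝ) : cosParam a b π = a := by
  rw [cosParam, Real.cos_pi]
  ring

theorem cosParam_mem_Ioo (hab : a < b) {θ : ℝ} (hθ : θ ∈ Set.Ioo 0 π) :
    cosParam a b θ ∈ Set.Ioo a b := by
  have hlower : -1 < cos θ := Real.cos_pi ▸ Real.cos_lt_cos_of_nonneg_of_le_pi hθ.1.le le_rfl hθ.2
  have hupper : cos θ < 1 := Real.cos_zero ▸ Real.cos_lt_cos_of_nonneg_of_le_pi le_rfl hθ.2.le hθ.1
  constructor <;> unfold cosParam <;> nlinarith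

theorem integral_angularDensity (hab : a ≤ b) (f : ℝ → ℝ) :
    (b - a) / 2 * ∫ θ in 0..π, angularDensity a b f θ = ∫ t in a..b, f t := by
  have change_of_variables := intervalIntegral.integral_comp_mul_deriv_of_deriv_nonpos (g := f)
    (differentiable_cosParam a b).continuous.continuousOn
    (fun θ _ => (differentiable_cosParam a b θ).hasDerivAt) (fun θ => deriv_cosParam_nonpos hab)
  rw [cosParam_zero, cosParam_pi] at change_of_variables
  rw [intervalIntegral.integral_symm b a, ← change_of_variables,
    ← intervalIntegral.integral_const_mul, ← intervalIntegral.integral_neg]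
  congr with θ
  rw [deriv_cosParam, angularDensity, Function.comp_apply]
  ring

theorem intervalIntegrable_angularDensity (hab : a < b) {f : ℝ → ℝ}
    (hf : IntervalIntegrable f volume a b) :
    IntervalIntegrable (angularDensity a b f) volume 0 π := by
  have pullback := (intervalIntegral.integrable_comp_mul_deriv_iff_of_deriv_nonpos (g := f)
    (differentiable_cosParam a b).continuous.continuousOn
    (fun θ _ => (differentiable_cosParam a b θ).hasDerivAt)
    (fun θ => deriv_cosParam_nonpos hab.le)).2
    (by simpa only [cosParam_zero, cosParam_pi] using hf.symm)
  convert! pullback.const_mul (-(2 / (b - a))) using 2 with θ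
  have : b - a ≠ 0 := (sub_pos.2 hab).ne'
  rw [deriv_cosParam, angularDensity, Function.comp_apply]
  field_simp

theorem eval_transplant_cos (a b : ℝ) (P : ℝ[X]) (θ : ℝ) :
    (transplant a b P).eval (cos θ) = P.eval (cosParam a b θ) := by
  simp only [transplant, eval_comp, eval_add, eval_mul, eval_C, eval_X, cosParam]
  ring_nf

theorem Jent_eq_cosMoment (a b : ℝ) (w : ℝ → ℝ) (k n : ℕ) :
    Jent a b w k n
      = cosMoment (fun θ => (U ℝ n).eval (cos θ) * angularDensity a b w⁻¹ θ) k := by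
  rw [Jent, cosMoment]
  congr with θ
  have := Chebyshev.U_real_cos θ n
  push_cast at this
  simp only [← this, angularDensity, cosParam, Pi.inv_apply]
  ring

theorem sum_Jent_mul_eq_cosMoment (hab : a < b) {w : ℝ → ℝ}
    (hw : IntervalIntegrable w⁻¹ volume a b) {N : ℕ} {P : ℝ[X]} {q : Fin (N + 1) → ℝ}
    (hq : transplant a b P = ∑ n : Fin (N + 1), C (q n) * U ℝ (n : ℕ)) (k : ℕ) :
    ∑ n : Fin (N + 1), Jent a b w k n * q n
      = cosMoment (angularDensity a b fun t => P.eval t / w t) k := by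
  have integrable (n : Fin (N + 1)) : IntervalIntegrable (fun θ =>
      cos (k * θ) * ((U ℝ (n : ℕ)).eval (cos θ) * angularDensity a b w⁻¹ θ) * q n) volume 0 π :=
    (((intervalIntegrable_angularDensity hab hw).continuousOn_mul (by fun_prop)).continuousOn_mul
      (by fun_prop)).mul_const _
  simp only [Jent_eq_cosMoment, cosMoment, ← intervalIntegral.integral_mul_const]
  rw [← intervalIntegral.integral_finsetSum fun n _ => integrable n]
  congr with θ
  have expansion := congrArg (eval (cos θ)) hq
  simp only [eval_transplant_cos, eval_finsetSum, eval_mul, eval_C] at expansion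
  simp only [angularDensity, expansion, div_eq_mul_inv, Pi.inv_apply, Finset.sum_mul,
    Finset.mul_sum]
  exact Finset.sum_congr rfl fun n _ => by ring

theorem integral_abs_div_eq_integral_abs_angularDensity (hab : a < b) {w : ℝ → ℝ}
    (hw : ∀ t ∈ Set.Ioo a b, 0 < w t) (f : ℝ → ℝ) :
    ∫ t in a..b, |f t| / w t
      = (b - a) / 2 * ∫ θ in 0..π, |angularDensity a b (fun t => f t / w t) θ| := by
  rw [← integral_angularDensity hab.le]
  congr 1
  refine intervalIntegral.integral_congr_Ioo_of_le Real.pi_nonneg fun θ hθ => ?_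
  simp only [angularDensity, abs_mul, abs_div, abs_of_pos (hw _ (cosParam_mem_Ioo hab hθ)),
    abs_of_pos (Real.sin_pos_of_mem_Ioo hθ)]

theorem isLeast_splittingMass_sum_Jent_mul (hab : a < b) {w : ℝ → ℝ}
    (hw : IntervalIntegrable w⁻¹ volume a b) {N : ℕ} {P : ℝ[X]} {q : Fin (N + 1) → ℝ}
    (hq : transplant a b P = ∑ n : Fin (N + 1), C (q n) * U ℝ (n : ℕ)) :
    IsLeast (splittingMass fun k => ∑ n : Fin (N + 1), Jent a b w k n * q n)
      (∫ θ in 0..π, |angularDensity a b (fun t => P.eval t / w t) θ|) := by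
  rw [funext (sum_Jent_mul_eq_cosMoment hab hw hq)]
  exact isLeast_splittingMass_cosMoment
    (intervalIntegrable_angularDensity hab (hw.continuousOn_mul (by fun_prop)))

end CosParam

theorem L1_norm_moment_reformulation_general {ι : Type*} (s : Finset ι) (a b : ι → ℝ)
    (hab : ∀ ℓ ∈ s, a ℓ < b ℓ) (w : ℝ → ℝ)
    (hw : IntegrableOn w⁻¹ (⋃ ℓ ∈ s, Set.Icc (a ℓ) (b ℓ)))
    (hwpos : ∀ x ∈ ⋃ ℓ ∈ s, Set.Ioo (a ℓ) (b ℓ), 0 < w x) (N : ℕ) (P : ℝ[X])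
    (q : ι → Fin (N + 1) → ℝ)
    (hq : ∀ ℓ ∈ s, transplant (a ℓ) (b ℓ) P
      = ∑ n : Fin (N + 1), C (q ℓ n) * U ℝ ((n : ℕ) : ℤ)) :
    IsLeast {r : ℝ | ∃ yp ym : ι → ℕ → ℝ,
        (∀ ℓ ∈ s, ∀ k : ℕ,
          yp ℓ k - ym ℓ k = ∑ n : Fin (N + 1), Jent (a ℓ) (b ℓ) w k n * q ℓ n) ∧
        (∀ ℓ ∈ s, ∀ d : ℕ, (toepN d (yp ℓ)).PosSemidef ∧ (toepN d (ym ℓ)).PosSemidef) ∧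
        r = ∑ ℓ ∈ s, (b ℓ - a ℓ) / 2 * (yp ℓ 0 + ym ℓ 0)}
      (∑ ℓ ∈ s, ∫ t in a ℓ..b ℓ, |P.eval t| / w t) := by
  have integrable_inv (ℓ : ι) (hℓ : ℓ ∈ s) : IntervalIntegrable w⁻¹ volume (a ℓ) (b ℓ) :=
    (intervalIntegrable_iff_integrableOn_Icc_of_le (hab ℓ hℓ).le).2
      (integrableOn_finset_iUnion.1 hw ℓ hℓ)
  have isLeast (ℓ : ι) (hℓ : ℓ ∈ s) :=
    isLeast_splittingMass_sum_Jent_mul (hab ℓ hℓ) (integrable_inv ℓ hℓ) (hq ℓ hℓ)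
  rw [Finset.sum_congr rfl fun ℓ hℓ => integral_abs_div_eq_integral_abs_angularDensity
    (hab ℓ hℓ) (fun t ht => hwpos t (Set.mem_biUnion hℓ ht)) fun t => P.eval t]
  constructor
  · choose! yp ym hmoment hpsd hmass using fun ℓ hℓ => (isLeast ℓ hℓ).1
    exact ⟨yp, ym, fun ℓ hℓ => congrFun (hmoment ℓ hℓ), hpsd,
      Finset.sum_congr rfl fun ℓ hℓ => by rw [hmass ℓ hℓ]⟩
  · rintro _ ⟨yp, ym, hmoment, hpsd, rfl⟩
    have width_nonneg (ℓ : ι) (hℓ : ℓ ∈ s) : 0 ≤ (b ℓ - a ℓ) / 2 := by linarith [hab ℓ hℓ]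
    exact Finset.sum_le_sum fun ℓ hℓ => mul_le_mul_of_nonneg_left
      ((isLeast ℓ hℓ).2 ⟨yp ℓ, ym ℓ, funext (hmoment ℓ hℓ), hpsd ℓ hℓ, rfl⟩) (width_nonneg ℓ hℓ)

/-- The weighted `L1` norm of a polynomial `P` of degree at most `N` on `K` equals the
infimum, over all sequences `y^{ℓ,±} ∈ ℝ^ℕ` with `y^{ℓ,+} − y^{ℓ,−} = J^ℓ W^ℓ p` and all
Toeplitz sections `Toep_d(y^{ℓ,±})` positive semidefinite, of
`∑_ℓ ((b_ℓ−a_ℓ)/2)(y^{ℓ,+}_0 + y^{ℓ,−}_0)`; moreover the infimum is attained. -/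
theorem L1_norm_moment_reformulation
    (L : ℕ) (hL : 0 < L) (a b : ℕ → ℝ)
    (ha0 : a 0 = -1) (hbL : b (L - 1) = 1)
    (hab : ∀ ℓ < L, a ℓ < b ℓ)
    (hgap : ∀ ℓ, ℓ + 1 < L → b ℓ < a (ℓ + 1))
    (w : ℝ → ℝ)
    (hw : ContinuousOn w (⋃ ℓ ∈ Finset.range L, Set.Icc (a ℓ) (b ℓ)))
    (hwpos : ∀ x ∈ ⋃ ℓ ∈ Finset.range L, Set.Icc (a ℓ) (b ℓ), 0 < w x)
    (N : ℕ) (P : Polynomial ℝ) (hP : P.natDegree ≤ N)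
    (q : ℕ → Fin (N + 1) → ℝ)
    (hq : ∀ ℓ < L, transplant (a ℓ) (b ℓ) P
        = ∑ n : Fin (N + 1), Polynomial.C (q ℓ n) * Polynomial.Chebyshev.U ℝ ((n : ℕ) : ℤ)) :
    IsLeast { s : ℝ |
      ∃ yp ym : ℕ → ℕ → ℝ,
        (∀ ℓ < L, ∀ k : ℕ,
            yp ℓ k - ym ℓ k = ∑ n : Fin (N + 1), Jent (a ℓ) (b ℓ) w k (n : ℕ) * q ℓ n) ∧
        (∀ ℓ < L, ∀ d : ℕ, (toepN d (yp ℓ)).PosSemidef ∧ (toepN d (ym ℓ)).PosSemidef) ∧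
        s = ∑ ℓ ∈ Finset.range L, ((b ℓ - a ℓ) / 2) * (yp ℓ 0 + ym ℓ 0) }
      (L1K L a b w P) := by
  have isCompact_domain : IsCompact (⋃ ℓ ∈ Finset.range L, Set.Icc (a ℓ) (b ℓ)) :=
    (Finset.range L).isCompact_biUnion fun _ _ => isCompact_Icc
  simpa only [L1K, Finset.mem_range] using L1_norm_moment_reformulation_general (Finset.range L)
    a b (by simpa using hab) w
    ((hw.inv₀ fun x hx => (hwpos x hx).ne').integrableOn_compact isCompact_domain)
    (fun x hx => hwpos x (Set.iUnion₂_mono (fun _ _ => Set.Ioo_subset_Icc_self) hx)) N P q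
    (by simpa using hq)
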